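/- For all α₁, α₂, α₃, α₄ ∈ (0, π) with α₁ + α₂ ≠ π and α₃ + α₄ ≠ π, writing tᵢ = tan(αᵢ/2): the equation cos((α₂ − α₁)/2)/cos((α₂ + α₁)/2) = ± cos((α₄ − α₃)/2)/cos((α₄ + α₃)/2) (i.e., equality holds with one of the two signs) is satisfied if and only if t₁t₂ = t₃t₄ or t₁t₂t₃t₄ = 1. -/

import Mathlib

open Real

theorem ratio_aux (a b : ℝ) (ha : a ∈ Set.Ioo 0 π) (hb : b ∈ Set.Ioo 0 π) (hab : a + b ≠ π) :
    1 - Real.tan (a / 2) * Real.tan (b / 2) ≠ 0 ∧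
    Real.cos ((b - a) / 2) / Real.cos ((b + a) / 2) =
      (1 + Real.tan (a / 2) * Real.tan (b / 2)) / (1 - Real.tan (a / 2) * Real.tan (b / 2)) := by
  obtain ⟨ha0, ha1⟩ := ha
  obtain ⟨hb0, hb1⟩ := hb
  have ca : Real.cos (a / 2) ≠ 0 := (Real.cos_pos_of_mem_Ioo ⟨by linarith, by linarith⟩).ne'
  have cb : Real.cos (b / 2) ≠ 0 := (Real.cos_pos_of_mem_Ioo ⟨by linarith, by linarith⟩).ne'
  have hs : Real.cos ((b + a) / 2) ≠ 0 := by
    intro h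
    apply hab
    have h2 : (b + a) / 2 = π / 2 :=
      Real.injOn_cos ⟨by linarith, by linarith⟩ ⟨by linarith, by linarith⟩
        (h.trans Real.cos_pi_div_two.symm)
    linarith
  have e1 : Real.cos ((b + a) / 2) =
      Real.cos (a / 2) * Real.cos (b / 2) * (1 - Real.tan (a / 2) * Real.tan (b / 2)) := by
    rw [add_div, Real.cos_add, Real.tan_eq_sin_div_cos, Real.tan_eq_sin_div_cos]
    field_simp
  have e2 : Real.cos ((b - a) / 2) =
      Real.cos (a / 2) * Real.cos (b / 2) * (1 + Real.tan (a / 2) * Real.tan (b / 2)) := by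
    rw [sub_div, Real.cos_sub, Real.tan_eq_sin_div_cos, Real.tan_eq_sin_div_cos]
    field_simp
  refine ⟨fun h => hs (by rw [e1, h, mul_zero]), ?_⟩
  rw [e1, e2, mul_div_mul_left _ _ (mul_ne_zero ca cb)]

theorem stmt8 (α₁ α₂ α₃ α₄ : ℝ)
    (h₁ : α₁ ∈ Set.Ioo 0 π) (h₂ : α₂ ∈ Set.Ioo 0 π)
    (h₃ : α₃ ∈ Set.Ioo 0 π) (h₄ : α₄ ∈ Set.Ioo 0 π)
    (h12 : α₁ + α₂ ≠ π) (h34 : α₃ + α₄ ≠ π) :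
    (Real.cos ((α₂ - α₁) / 2) / Real.cos ((α₂ + α₁) / 2) =
        Real.cos ((α₄ - α₃) / 2) / Real.cos ((α₄ + α₃) / 2) ∨
     Real.cos ((α₂ - α₁) / 2) / Real.cos ((α₂ + α₁) / 2) =
        -(Real.cos ((α₄ - α₃) / 2) / Real.cos ((α₄ + α₃) / 2))) ↔
    (Real.tan (α₁ / 2) * Real.tan (α₂ / 2) = Real.tan (α₃ / 2) * Real.tan (α₄ / 2) ∨
     Real.tan (α₁ / 2) * Real.tan (α₂ / 2) * Real.tan (α₃ / 2) * Real.tan (α₄ / 2) = 1) := by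
  obtain ⟨n1, r1⟩ := ratio_aux α₁ α₂ h₁ h₂ h12
  obtain ⟨n2, r2⟩ := ratio_aux α₃ α₄ h₃ h₄ h34
  rw [r1, r2, mul_assoc (Real.tan (α₁ / 2) * Real.tan (α₂ / 2))]
  generalize Real.tan (α₁ / 2) * Real.tan (α₂ / 2) = p at *
  generalize Real.tan (α₃ / 2) * Real.tan (α₄ / 2) = q at *
  rw [← neg_div, div_eq_div_iff n1 n2, div_eq_div_iff n1 n2]
  constructor
  · rintro (h | h)
    · left; linarith
    · right; linarith
  · rintro (h | h)
    · left; rw [h]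
    · right; linarith
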